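/- Let n ≥ 1 be an integer, let q be a prime power, and let x ∈ F_q^× be an element of multiplicative order o. Then the number of pairs (A, B), where A is a monic polynomial of degree n over F_q, B is a polynomial over F_q of degree strictly less than n, and Res(A, B) = x, equals q^n · Σ_{(a,b,c)} μ(a) · q^{b−1} · g(c), where the sum ranges over all ordered triples (a,b,c) of positive integers with a·b·c = n, and g(c) = gcd(c, q−1) if gcd(c, q−1) divides (q−1)/o, and g(c) = 0 otherwise. -/

import Mathlib

open Polynomial

/-- The resultant `Res(φ, ψ)` of a monic polynomial `φ` and a polynomial `ψ`, computed
(inside the algebraic closure) as the product `∏ ψ(αᵢ)` over the roots `αᵢ` of `φ`,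
counted with multiplicity. -/
noncomputable def resultantAC {k : Type*} [Field k] (φ ψ : k[X]) : AlgebraicClosure k :=
  (((φ.map (algebraMap k (AlgebraicClosure k))).roots).map
    fun α => (ψ.map (algebraMap k (AlgebraicClosure k))).eval α).prod

/-- `Res_n(k)`: the set of pairs `(φ, ψ)` of monic degree-`n` polynomials over `k`
with `Res(φ, ψ) = 1`. -/
def ResPairs (k : Type*) [Field k] (n : ℕ) : Set (k[X] × k[X]) :=
  {p | p.1.Monic ∧ p.1.natDegree = n ∧ p.2.Monic ∧ p.2.natDegree = n ∧
    resultantAC p.1 p.2 = 1}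


theorem card_fiber_hom {G K : Type*} [Group G] [Group K] [Finite G] (f : G →* K) (x : K) :
    (x ∉ f.range → Nat.card {u // f u = x} = 0) ∧
    (x ∈ f.range → Nat.card {u // f u = x} * Nat.card f.range = Nat.card G) := by
  constructor
  · intro h
    have : IsEmpty {u // f u = x} := ⟨fun u => h ⟨u.1, u.2⟩⟩
    simp
  · rintro ⟨a, rfl⟩
    have e : {u // f u = f a} ≃ f.ker :=
      { toFun := fun u => ⟨a⁻¹ * u.1, by simp [MonoidHom.mem_ker, u.2]⟩
        invFun := fun k => ⟨a * k.1, by simp [(MonoidHom.mem_ker).1 k.2]⟩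
        left_inv := fun u => by simp
        right_inv := fun k => by simp }
    rw [Nat.card_congr e, ← Subgroup.index_ker, Subgroup.card_mul_index]

theorem card_fiber_two {G G' K : Type*} [Group G] [Group G'] [Group K] [Finite G] [Finite G']
    (f : G →* K) (f' : G' →* K) (h : f.range = f'.range) (x : K) :
    Nat.card {u // f u = x} * Nat.card G' = Nat.card G * Nat.card {u // f' u = x} := by
  have h1 := card_fiber_hom f x
  have h2 := card_fiber_hom f' x
  by_cases hx : x ∈ f.range
  · have a := h1.2 hx
    have b := h2.2 (h ▸ hx)
    rw [← a, ← b, h]; ring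
  · rw [h1.1 hx, h2.1 (h ▸ hx)]; simp

theorem card_pow_fiber {G : Type*} [CommGroup G] [IsCyclic G] [Finite G] (e : ℕ) (x : G) :
    Nat.card {y : G // y ^ e = x} =
      if Nat.gcd e (Nat.card G) ∣ Nat.card G / orderOf x then Nat.gcd e (Nat.card G) else 0 := by
  set N := Nat.card G with hN
  have hNpos : 0 < N := Nat.card_pos
  have hgN : Nat.gcd e N ∣ N := Nat.gcd_dvd_right _ _
  have hgpos : 0 < Nat.gcd e N := Nat.gcd_pos_of_pos_right _ hNpos
  have hon : orderOf x ∣ N := orderOf_dvd_natCard x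
  have hopos : 0 < orderOf x := Nat.pos_of_dvd_of_pos hon hNpos
  have hrc := IsCyclic.card_powMonoidHom_range (G := G) e
  rw [← hN, Nat.gcd_comm] at hrc
  have hkc := IsCyclic.card_powMonoidHom_ker (G := G) (N / Nat.gcd e N)
  rw [← hN, Nat.gcd_eq_right (Nat.div_dvd_of_dvd hgN)] at hkc
  have hle : (powMonoidHom e : G →* G).range ≤ (powMonoidHom (N / Nat.gcd e N) : G →* G).ker := by
    rintro _ ⟨y, rfl⟩
    rw [MonoidHom.mem_ker]
    simp only [powMonoidHom_apply]
    rw [← pow_mul]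
    apply orderOf_dvd_iff_pow_eq_one.1
    refine (orderOf_dvd_natCard y).trans ?_
    obtain ⟨k, hk⟩ := Nat.gcd_dvd_left e N
    refine ⟨k, ?_⟩
    calc e * (N / e.gcd N) = (e.gcd N * k) * (N / e.gcd N) := by rw [← hk]
      _ = e.gcd N * (N / e.gcd N) * k := by ring
      _ = N * k := by rw [Nat.mul_div_cancel' hgN]
  have heq := Subgroup.eq_of_le_of_card_ge hle (by rw [hrc, hkc])
  have hmem : x ∈ (powMonoidHom e : G →* G).range ↔ Nat.gcd e N ∣ N / orderOf x := by
    rw [heq, MonoidHom.mem_ker, powMonoidHom_apply, ← orderOf_dvd_iff_pow_eq_one,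
      Nat.dvd_div_iff_mul_dvd hgN, Nat.dvd_div_iff_mul_dvd hon, mul_comm]
  have h1 := card_fiber_hom (powMonoidHom e : G →* G) x
  simp only [powMonoidHom_apply] at h1
  split_ifs with hd
  · have h2 := h1.2 (hmem.2 hd)
    rw [hrc, ← hN] at h2
    have h3 := Nat.mul_div_cancel' hgN
    have hp : 0 < N / Nat.gcd e N := Nat.div_pos (Nat.le_of_dvd hNpos hgN) hgpos
    exact Nat.eq_of_mul_eq_mul_right hp (h2.trans h3.symm)
  · exact h1.1 (fun h => hd (hmem.1 h))

/-- The set of exponents: a subgroup containing all `a`-th and `b`-th powers contains gcd powers. -/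
theorem pow_gcd_mem {K ι : Type*} [CommGroup K] (H : Subgroup K) (s : Finset ι) (m : ι → ℕ)
    (h : ∀ i ∈ s, ∀ u : K, u ^ (m i) ∈ H) (u : K) : u ^ (s.gcd m) ∈ H := by
  classical
  induction s using Finset.induction_on with
  | empty => simp
  | insert a s ha ih =>
    have h1 := h a (by simp)
    have h2 : u ^ (s.gcd m) ∈ H := ih (fun i hi => h i (by simp [hi]))
    rw [Finset.gcd_insert]
    have : u ^ (GCDMonoid.gcd (m a) (s.gcd m)) = u ^ (((Nat.gcd (m a) (s.gcd m) : ℕ) : ℤ)) := by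
      rw [zpow_natCast]; rfl
    rw [this, Nat.gcd_eq_gcd_ab, zpow_add, zpow_mul, zpow_mul, zpow_natCast, zpow_natCast]
    exact H.mul_mem (H.zpow_mem (h1 u) _) (H.zpow_mem h2 _)


section res
variable {F : Type*} [Field F]


theorem resAC_mul_right (A B B' : F[X]) :
    resultantAC A (B * B') = resultantAC A B * resultantAC A B' := by
  simp [resultantAC]

theorem resAC_one_right (A : F[X]) : resultantAC A 1 = 1 := by
  simp [resultantAC]

theorem resAC_mul_left (A A' B : F[X]) (h : A * A' ≠ 0) :
    resultantAC (A * A') B = resultantAC A B * resultantAC A' B := by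
  have : A.map (algebraMap F (AlgebraicClosure F)) * A'.map (algebraMap F (AlgebraicClosure F)) ≠ 0 := by
    rw [← Polynomial.map_mul]
    exact (Polynomial.map_ne_zero_iff (algebraMap F (AlgebraicClosure F)).injective).2 h
  simp [resultantAC, Polynomial.roots_mul this]

theorem resAC_pow_left (A B : F[X]) (d : ℕ) :
    resultantAC (A ^ d) B = resultantAC A B ^ d := by
  simp [resultantAC, Polynomial.roots_pow, Multiset.map_nsmul, Multiset.prod_nsmul]

theorem resAC_congr (A B B' : F[X]) (h : A ∣ B - B') :
    resultantAC A B = resultantAC A B' := by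
  unfold resultantAC
  congr 1
  apply Multiset.map_congr rfl
  intro α hα
  obtain ⟨C, hC⟩ := h
  have : B = B' + A * C := by rw [← hC]; ring
  have h0 := (Polynomial.mem_roots'.1 hα).2
  rw [Polynomial.IsRoot.def] at h0
  rw [this, Polynomial.map_add, Polynomial.map_mul, eval_add, eval_mul, h0]
  simp

theorem resAC_spec (A B : F[X]) (hA : A.Monic) :
    algebraMap F (AlgebraicClosure F) (A.resultant B) = resultantAC A B := by
  rw [← Polynomial.resultant_map_map]
  have h := Polynomial.resultant_eq_prod_eval (A.map (algebraMap F (AlgebraicClosure F)))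
    (B.map (algebraMap F (AlgebraicClosure F))) B.natDegree (by simp) (IsAlgClosed.splits _)
  rw [Polynomial.natDegree_map] at h
  rw [h, (hA.map _).leadingCoeff]
  simp [resultantAC]

theorem resAC_eq_zero_iff (A B : F[X]) (hA : A.Monic) :
    resultantAC A B = 0 ↔ ¬ IsCoprime A B := by
  rw [← resAC_spec A B hA, map_eq_zero, Polynomial.resultant_eq_zero_iff]
  simp [hA.ne_zero]

/-- The resultant as a monoid homomorphism on the quotient ring. -/
noncomputable def resHom (A : F[X]) (hA : A.Monic) : AdjoinRoot A →* F where
  toFun b := A.resultant (AdjoinRoot.modByMonicHom hA b)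
  map_one' := by
    apply (algebraMap F (AlgebraicClosure F)).injective
    rw [resAC_spec _ _ hA, map_one (algebraMap F (AlgebraicClosure F)), ← resAC_one_right A]
    apply resAC_congr
    rw [← AdjoinRoot.mk_eq_mk, AdjoinRoot.mk_leftInverse hA]
    simp
  map_mul' b c := by
    apply (algebraMap F (AlgebraicClosure F)).injective
    rw [map_mul (algebraMap F (AlgebraicClosure F)), resAC_spec _ _ hA, resAC_spec _ _ hA, resAC_spec _ _ hA, ← resAC_mul_right]
    apply resAC_congr
    rw [← AdjoinRoot.mk_eq_mk, map_mul (AdjoinRoot.mk A), AdjoinRoot.mk_leftInverse hA, AdjoinRoot.mk_leftInverse hA,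
      AdjoinRoot.mk_leftInverse hA]

theorem resHom_mk (A : F[X]) (hA : A.Monic) (B : F[X]) :
    algebraMap F (AlgebraicClosure F) (resHom A hA (AdjoinRoot.mk A B)) = resultantAC A B := by
  change algebraMap F (AlgebraicClosure F) (A.resultant (AdjoinRoot.modByMonicHom hA _)) = _
  rw [resAC_spec _ _ hA]
  apply resAC_congr
  rw [← AdjoinRoot.mk_eq_mk, AdjoinRoot.mk_leftInverse hA]

theorem isUnit_mk_iff (A B : F[X]) : IsUnit (AdjoinRoot.mk A B) ↔ IsCoprime A B := by
  constructor
  · intro h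
    obtain ⟨c, hc⟩ := isUnit_iff_exists_inv.1 h
    obtain ⟨C, rfl⟩ := AdjoinRoot.mk_surjective c
    rw [← map_mul, ← map_one (AdjoinRoot.mk A), AdjoinRoot.mk_eq_mk] at hc
    obtain ⟨D, hD⟩ := hc
    exact ⟨-D, C, by linear_combination hD⟩
  · rintro ⟨a, b, h⟩
    refine IsUnit.of_mul_eq_one (AdjoinRoot.mk A b) ?_
    rw [← map_mul, ← map_one (AdjoinRoot.mk A), AdjoinRoot.mk_eq_mk]
    exact ⟨-a, by linear_combination h⟩

/-- Polynomials of degree less than that of `A` correspond to residue classes. -/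
noncomputable def residueEquiv (A : F[X]) (hA : A.Monic) :
    {B : F[X] // B.degree < (A.natDegree : ℕ)} ≃ AdjoinRoot A where
  toFun B := AdjoinRoot.mk A B.1
  invFun b := ⟨AdjoinRoot.modByMonicHom hA b, by
    obtain ⟨C, rfl⟩ := AdjoinRoot.mk_surjective b
    rw [AdjoinRoot.modByMonicHom_mk, ← degree_eq_natDegree hA.ne_zero]
    exact degree_modByMonic_lt _ hA⟩
  left_inv B := by
    apply Subtype.ext
    simp only [AdjoinRoot.modByMonicHom_mk]
    rw [modByMonic_eq_self_iff hA, degree_eq_natDegree hA.ne_zero]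
    exact B.2
  right_inv b := AdjoinRoot.mk_leftInverse hA b

theorem card_res_eq (A : F[X]) (hA : A.Monic) (x : Fˣ) :
    Nat.card {B : F[X] // B.degree < (A.natDegree : ℕ) ∧
      resultantAC A B = algebraMap F (AlgebraicClosure F) x} =
    Nat.card {u : (AdjoinRoot A)ˣ // Units.map (resHom A hA) u = x} := by
  have key : ∀ B : F[X], resultantAC A B = algebraMap F (AlgebraicClosure F) x ↔
      resHom A hA (AdjoinRoot.mk A B) = x := by
    intro B
    rw [← resHom_mk A hA B]
    exact (algebraMap F (AlgebraicClosure F)).injective.eq_iff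
  symm
  refine Nat.card_congr (Equiv.ofBijective
    (fun u => ⟨((residueEquiv A hA).symm u.1.1).1, ((residueEquiv A hA).symm u.1.1).2, ?_⟩) ⟨?_, ?_⟩)
  · rw [key]
    have := (residueEquiv A hA).apply_symm_apply u.1.1
    change AdjoinRoot.mk A _ = _ at this
    rw [this]
    exact congrArg Units.val u.2
  · intro u v h
    simp only [Subtype.mk.injEq] at h
    have := (residueEquiv A hA).symm.injective (Subtype.ext h)
    exact Subtype.ext (Units.ext this)
  · rintro ⟨B, hB, hr⟩
    have hu : IsUnit (AdjoinRoot.mk A B) := by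
      rw [isUnit_mk_iff]
      by_contra hc
      rw [← resAC_eq_zero_iff A B hA, hr] at hc
      simp at hc
    refine ⟨⟨hu.unit, Units.ext ?_⟩, ?_⟩
    · exact (key B).1 hr
    · simp only [Subtype.mk.injEq, IsUnit.unit_spec]
      exact congrArg Subtype.val ((residueEquiv A hA).symm_apply_apply ⟨B, hB⟩)

theorem card_units_eq (A : F[X]) (hA : A.Monic) :
    Nat.card {B : F[X] // B.degree < (A.natDegree : ℕ) ∧ IsCoprime A B} =
    Nat.card (AdjoinRoot A)ˣ := by
  symm
  refine Nat.card_congr (Equiv.ofBijective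
    (fun u => ⟨((residueEquiv A hA).symm u.1).1, ((residueEquiv A hA).symm u.1).2, ?_⟩) ⟨?_, ?_⟩)
  · rw [← isUnit_mk_iff]
    have := (residueEquiv A hA).apply_symm_apply u.1
    change AdjoinRoot.mk A _ = _ at this
    rw [this]
    exact u.isUnit
  · intro u v h
    simp only [Subtype.mk.injEq] at h
    exact Units.ext ((residueEquiv A hA).symm.injective (Subtype.ext h))
  · rintro ⟨B, hB, hr⟩
    rw [← isUnit_mk_iff] at hr
    refine ⟨hr.unit, ?_⟩
    simp only [Subtype.mk.injEq, IsUnit.unit_spec]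
    exact congrArg Subtype.val ((residueEquiv A hA).symm_apply_apply ⟨B, hB⟩)

open UniqueFactorizationMonoid in
/-- gcd of the multiplicities of the irreducible factors. -/
noncomputable def expo [DecidableEq F] (A : F[X]) : ℕ := by
  classical
  exact (normalizedFactors A).toFinset.gcd (fun P => (normalizedFactors A).count P)

open UniqueFactorizationMonoid in
theorem monic_of_mem [DecidableEq F] (A P : F[X]) (h : P ∈ normalizedFactors A) : P.Monic := by
  classical
  have h1 := normalize_normalized_factor P h
  have h0 := (irreducible_of_normalized_factor P h).ne_zero
  rw [← h1]
  exact monic_normalize h0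

open UniqueFactorizationMonoid in
theorem dvd_expo_iff [DecidableEq F] (A : F[X]) (hA : A.Monic) (d : ℕ) (hd : 1 ≤ d) :
    d ∣ expo A ↔ ∃ C : F[X], C.Monic ∧ C ^ d = A := by
  classical
  constructor
  · intro h
    obtain ⟨s, hs⟩ := Multiset.exists_smul_of_dvd_count (normalizedFactors A) (k := d) (by
      intro a ha
      unfold expo at h
      refine h.trans ?_
      convert Finset.gcd_dvd (f := fun P => (normalizedFactors A).count P) (Multiset.mem_toFinset.2 ha))
    refine ⟨s.prod, ?_, ?_⟩
    · have := monic_multiset_prod_of_monic s id (fun i hi => by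
        apply monic_of_mem A
        rw [hs]
        exact (Multiset.mem_nsmul).2 ⟨by omega, hi⟩)
      simpa using this
    · rw [← Multiset.prod_nsmul, ← hs, prod_normalizedFactors_eq hA.ne_zero, hA.normalize_eq_self]
  · rintro ⟨C, hC, rfl⟩
    unfold expo
    refine Finset.dvd_gcd fun P _ => ?_
    rw [normalizedFactors_pow, Multiset.count_nsmul]
    exact dvd_mul_right _ _

end res

section fin
variable {F : Type*} [Field F]

theorem finite_adjoinRoot [Finite F] (A : F[X]) (hA : A.Monic) : Finite (AdjoinRoot A) := by
  have : Module.Finite F (AdjoinRoot A) := hA.finite_adjoinRoot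
  exact Module.finite_of_finite F

theorem resAC_surj_irred [Finite F] (P : F[X]) (hP : Irreducible P) (u : F) :
    ∃ b : F[X], resultantAC P b = algebraMap F (AlgebraicClosure F) u := by
  classical
  have : Fact (Irreducible P) := ⟨hP⟩
  have : FiniteDimensional F (AdjoinRoot P) := (AdjoinRoot.powerBasis hP.ne_zero).finite
  have : Finite (AdjoinRoot P) := Module.finite_of_finite F
  obtain ⟨y, hy⟩ := FiniteField.norm_surjective F (AdjoinRoot P) u
  obtain ⟨b, rfl⟩ := AdjoinRoot.mk_surjective y
  refine ⟨b, ?_⟩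
  rw [← hy, Algebra.norm_eq_prod_embeddings F (AlgebraicClosure F)]
  have hsep : P.Separable := PerfectField.separable_of_irreducible hP
  have hnd : (P.aroots (AlgebraicClosure F)).Nodup := nodup_roots hsep.map
  unfold resultantAC
  change ((P.aroots (AlgebraicClosure F)).map _).prod = _
  rw [← Finset.prod_mk _ hnd]
  symm
  refine Finset.prod_bij (fun σ _ => σ (AdjoinRoot.root P)) ?_ ?_ ?_ ?_
  · intro σ _
    exact ((AdjoinRoot.equiv (AlgebraicClosure F) F P hP.ne_zero) σ).2
  · intro σ _ τ _ h
    exact AdjoinRoot.algHom_ext h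
  · intro α hα
    let σ := (AdjoinRoot.equiv (AlgebraicClosure F) F P hP.ne_zero).symm ⟨α, hα⟩
    refine ⟨σ, Finset.mem_univ _, ?_⟩
    have := (AdjoinRoot.equiv (AlgebraicClosure F) F P hP.ne_zero).apply_symm_apply ⟨α, hα⟩
    exact congrArg Subtype.val this
  · intro σ _
    rw [eval_map_algebraMap, ← AdjoinRoot.aeval_eq, aeval_algHom_apply]

variable [DecidableEq F]

theorem expo_pos (A : F[X]) (hA : A.Monic) (hn : 1 ≤ A.natDegree) : 1 ≤ expo A := by
  by_contra h
  have h0 : expo A = 0 := by omega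
  obtain ⟨C, hC, hCA⟩ := (dvd_expo_iff A hA (A.natDegree + 1) (by omega)).1 (by rw [h0]; simp)
  have h1 : A.natDegree = (A.natDegree + 1) * C.natDegree := by
    conv_lhs => rw [← hCA]
    rw [hC.natDegree_pow]
  rcases Nat.eq_zero_or_pos C.natDegree with h2 | h2
  · rw [h2] at h1; omega
  · nlinarith

open UniqueFactorizationMonoid in
theorem res_range [Finite F] (A : F[X]) (hA : A.Monic) (hn : 1 ≤ A.natDegree) :
    (Units.map (resHom A hA)).range = (powMonoidHom (expo A) : Fˣ →* Fˣ).range := by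
  have he := expo_pos A hA hn
  apply le_antisymm
  · rintro _ ⟨u, rfl⟩
    obtain ⟨B, hB⟩ := AdjoinRoot.mk_surjective (u : AdjoinRoot A)
    obtain ⟨C, hC, hCA⟩ := (dvd_expo_iff A hA (expo A) he).1 dvd_rfl
    have h1 : ((Units.map (resHom A hA) u : Fˣ) : F) = (C.resultant B) ^ expo A := by
      apply (algebraMap F (AlgebraicClosure F)).injective
      rw [Units.coe_map, ← hB]
      change algebraMap F (AlgebraicClosure F) (resHom A hA (AdjoinRoot.mk A B)) = _
      rw [resHom_mk, map_pow, resAC_spec _ _ hC, ← resAC_pow_left, hCA]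
    have h2 : C.resultant B ≠ 0 := by
      intro h0
      rw [h0, zero_pow (by omega)] at h1
      exact (Units.ne_zero _) h1
    refine ⟨Units.mk0 _ h2, Units.ext ?_⟩
    rw [h1]
    simp
  · rintro _ ⟨u, rfl⟩
    rw [powMonoidHom_apply]
    unfold expo
    refine pow_gcd_mem _ _ _ ?_ u
    intro P hP u
    rw [Multiset.mem_toFinset] at hP
    have hPi := irreducible_of_normalized_factor P hP
    have hPm := monic_of_mem A P hP
    have hfm : FiniteMultiplicity P A := FiniteMultiplicity.of_not_isUnit hPi.not_isUnit hA.ne_zero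
    obtain ⟨D, hD, hPD⟩ := hfm.exists_eq_pow_mul_and_not_dvd
    set k := multiplicity P A
    have hD0 : D ≠ 0 := by rintro rfl; simp at hPD
    have hcount : (normalizedFactors A).count P = k := by
      rw [hD, normalizedFactors_mul (pow_ne_zero _ hPi.ne_zero) hD0, normalizedFactors_pow,
        Multiset.count_add, Multiset.count_nsmul, normalizedFactors_irreducible hPi,
        hPm.normalize_eq_self, Multiset.count_eq_zero_of_notMem
          (fun h => hPD (dvd_of_mem_normalizedFactors h))]
      simp
    obtain ⟨b, hb⟩ := resAC_surj_irred P hPi (u : F)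
    have hcop : IsCoprime P D := (hPi.coprime_iff_not_dvd).2 hPD
    obtain ⟨r, s, hrs⟩ := hcop
    -- B = b s D + r P
    let B := b * (s * D) + r * P
    have hB1 : resultantAC P B = algebraMap F (AlgebraicClosure F) u := by
      rw [← hb]
      apply resAC_congr
      exact ⟨r - b * r, by simp only [B]; linear_combination b * hrs⟩
    have hB2 : resultantAC D B = 1 := by
      rw [← resAC_one_right D]
      apply resAC_congr
      exact ⟨b * s - s, by simp only [B]; linear_combination hrs⟩
    have hAB : resultantAC A B = algebraMap F (AlgebraicClosure F) ((u : F) ^ k) := by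
      have : resultantAC A B = resultantAC (P ^ k * D) B := by rw [← hD]
      rw [this, resAC_mul_left _ _ _ (by rw [← hD]; exact hA.ne_zero), resAC_pow_left, hB1, hB2,
        mul_one, map_pow]
    have hu : IsUnit (AdjoinRoot.mk A B) := by
      rw [isUnit_mk_iff]
      by_contra hc
      rw [← resAC_eq_zero_iff A B hA, hAB] at hc
      simp at hc
    refine ⟨hu.unit, Units.ext ?_⟩
    rw [hcount]
    apply (algebraMap F (AlgebraicClosure F)).injective
    rw [Units.coe_map]
    change algebraMap F (AlgebraicClosure F) (resHom A hA (AdjoinRoot.mk A B)) = _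
    rw [resHom_mk, hAB]
    simp

/-- Number of residues coprime to `A`. -/
noncomputable def phiP (A : F[X]) : ℕ :=
  Nat.card {B : F[X] // B.degree < (A.natDegree : ℕ) ∧ IsCoprime A B}

/-- The function `g`. -/
noncomputable def gfun (q o c : ℕ) : ℕ :=
  if Nat.gcd c (q - 1) ∣ (q - 1) / o then Nat.gcd c (q - 1) else 0

theorem card_res_mul [Finite F] (A : F[X]) (hA : A.Monic) (hn : 1 ≤ A.natDegree) (x : Fˣ) :
    Nat.card {B : F[X] // B.degree < (A.natDegree : ℕ) ∧
      resultantAC A B = algebraMap F (AlgebraicClosure F) x} * (Nat.card F - 1) =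
    phiP A * gfun (Nat.card F) (orderOf x) (expo A) := by
  have := finite_adjoinRoot A hA
  have h := card_fiber_two (Units.map (resHom A hA)) (powMonoidHom (expo A)) (res_range A hA hn) x
  simp only [powMonoidHom_apply] at h
  have hc : Nat.card Fˣ = Nat.card F - 1 := Nat.card_units F
  rw [card_res_eq A hA, phiP, card_units_eq A hA, ← hc, h, card_pow_fiber, hc]
  rfl

end fin

section count
variable {F : Type*} [Field F]

theorem finite_LT [Finite F] (n : ℕ) : Finite {B : F[X] // B.degree < (n : ℕ)} := by
  have e : {B : F[X] // B.degree < (n : ℕ)} ≃ degreeLT F n :=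
    Equiv.subtypeEquivRight (fun B => mem_degreeLT.symm)
  exact Finite.of_equiv _ (e.trans (degreeLTEquiv F n).toEquiv).symm

theorem card_LT [Finite F] (n : ℕ) :
    Nat.card {B : F[X] // B.degree < (n : ℕ)} = Nat.card F ^ n := by
  have e : {B : F[X] // B.degree < (n : ℕ)} ≃ degreeLT F n :=
    Equiv.subtypeEquivRight (fun B => mem_degreeLT.symm)
  rw [Nat.card_congr (e.trans (degreeLTEquiv F n).toEquiv)]
  simp [Nat.card_fun]

theorem finite_Mon [Finite F] (n : ℕ) : Finite {A : F[X] // A.Monic ∧ A.natDegree = n} := by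
  exact Finite.of_equiv _ ((monicEquivDegreeLT n).trans (degreeLTEquiv F n).toEquiv).symm

theorem card_Mon [Finite F] (n : ℕ) :
    Nat.card {A : F[X] // A.Monic ∧ A.natDegree = n} = Nat.card F ^ n := by
  rw [Nat.card_congr ((monicEquivDegreeLT n).trans (degreeLTEquiv F n).toEquiv)]
  simp [Nat.card_fun]

/-- The finset of monic polynomials of degree `n`. -/
noncomputable def MonF (F : Type*) [Field F] [Finite F] (n : ℕ) : Finset F[X] :=
  (Set.finite_coe_iff.1 (finite_Mon (F := F) n) : {A : F[X] | A.Monic ∧ A.natDegree = n}.Finite).toFinset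

theorem mem_MonF [Finite F] (n : ℕ) (A : F[X]) : A ∈ MonF F n ↔ A.Monic ∧ A.natDegree = n := by
  simp [MonF]

theorem card_pairs [Finite F] (n : ℕ) (Q : F[X] → F[X] → Prop) :
    Nat.card {p : F[X] × F[X] // p.1.Monic ∧ p.1.natDegree = n ∧ p.2.degree < (n : ℕ) ∧ Q p.1 p.2} =
    ∑ A ∈ MonF F n, Nat.card {B : F[X] // B.degree < (A.natDegree : ℕ) ∧ Q A B} := by
  classical
  have hfin : ∀ A : F[X], Finite {B : F[X] // B.degree < (A.natDegree : ℕ) ∧ Q A B} := fun A => by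
    have := finite_LT (F := F) A.natDegree
    exact Finite.of_injective (β := {B : F[X] // B.degree < (A.natDegree : ℕ)})
      (fun B => ⟨B.1, B.2.1⟩) (fun a b h => by
        simp only [Subtype.mk.injEq] at h
        exact Subtype.ext h)
  rw [← Finset.sum_coe_sort, ← Nat.card_sigma]
  refine Nat.card_congr
    { toFun := fun p => ⟨⟨p.1.1, (mem_MonF n _).2 ⟨p.2.1, p.2.2.1⟩⟩, ⟨p.1.2, ?_, p.2.2.2.2⟩⟩
      invFun := fun s => ⟨(s.1.1, s.2.1), ?_⟩
      left_inv := ?_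
      right_inv := ?_ }
  · rw [p.2.2.1]; exact p.2.2.2.1
  · have h := (mem_MonF n _).1 s.1.2
    have h' := s.2.2.1.trans_eq (congrArg (Nat.cast : ℕ → WithBot ℕ) h.2)
    exact ⟨h.1, h.2, h', s.2.2.2⟩
  · intro p; rfl
  · intro s; rfl

theorem card_coprime_ge [Finite F] (A : F[X]) (hA : A.Monic) (N : ℕ) (hN : A.natDegree ≤ N) :
    Nat.card {B : F[X] // B.degree < (N : ℕ) ∧ IsCoprime A B} =
      Nat.card F ^ (N - A.natDegree) * phiP A := by
  rw [← card_LT, phiP, ← Nat.card_prod]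
  symm
  have hdeg : ∀ Q : F[X], Q.degree < ((N - A.natDegree : ℕ) : WithBot ℕ) ↔ (A * Q).degree < (N : ℕ) := by
    intro Q
    by_cases hQ : Q = 0
    · simp [hQ]
    · rw [degree_mul, degree_eq_natDegree hQ, degree_eq_natDegree hA.ne_zero]
      norm_cast
      omega
  refine Nat.card_congr (Equiv.ofBijective
    (fun p => ⟨A * p.1.1 + p.2.1, ?_, ?_⟩) ⟨?_, ?_⟩)
  · refine (degree_add_le _ _).trans_lt (max_lt ((hdeg _).1 p.1.2) (p.2.2.1.trans_le ?_))
    exact_mod_cast hN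
  · have := p.2.2.2
    rw [add_comm]
    exact IsCoprime.add_mul_left_right this _
  · rintro ⟨⟨Q, hQ⟩, ⟨R, hR⟩⟩ ⟨⟨Q', hQ'⟩, ⟨R', hR'⟩⟩ h
    simp only [Subtype.mk.injEq] at h
    have h1 := div_modByMonic_unique (f := A * Q + R) Q R hA
      ⟨add_comm _ _, by rw [degree_eq_natDegree hA.ne_zero]; exact hR.1⟩
    have h2 := div_modByMonic_unique (f := A * Q + R) Q' R' hA
      ⟨by rw [h, add_comm], by rw [degree_eq_natDegree hA.ne_zero]; exact hR'.1⟩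
    have e1 : Q = Q' := h1.1.symm.trans h2.1
    have e2 : R = R' := h1.2.symm.trans h2.2
    subst e1; subst e2; rfl
  · rintro ⟨B, hB, hc⟩
    have hBe := modByMonic_add_div B A
    have hr : (B %ₘ A).degree < (A.natDegree : ℕ) := by
      rw [← degree_eq_natDegree hA.ne_zero]; exact degree_modByMonic_lt _ hA
    refine ⟨⟨⟨B /ₘ A, ?_⟩, ⟨B %ₘ A, hr, ?_⟩⟩, ?_⟩
    · rw [hdeg]
      have : A * (B /ₘ A) = B - B %ₘ A := by linear_combination hBe
      rw [this]
      refine (degree_sub_le _ _).trans_lt (max_lt hB (hr.trans_le ?_))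
      exact_mod_cast hN
    · have : B %ₘ A = B + A * (-(B /ₘ A)) := by linear_combination hBe
      rw [this]
      exact IsCoprime.add_mul_left_right hc _
    · apply Subtype.ext
      simp only
      rw [add_comm]; exact hBe

theorem phiP_pow [Finite F] (C : F[X]) (hC : C.Monic) (d : ℕ) (hd : 1 ≤ d) :
    phiP (C ^ d) = Nat.card F ^ (d * C.natDegree - C.natDegree) * phiP C := by
  rw [← card_coprime_ge C hC _ (by nlinarith), phiP, hC.natDegree_pow]
  refine Nat.card_congr (Equiv.subtypeEquivRight fun B => ?_)
  rw [IsCoprime.pow_left_iff (by omega)]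

/-- number of coprime pairs -/
noncomputable def cop (F : Type*) [Field F] (n : ℕ) : ℕ :=
  Nat.card {p : F[X] × F[X] // p.1.Monic ∧ p.1.natDegree = n ∧ p.2.degree < (n : ℕ) ∧
    IsCoprime p.1 p.2}

theorem sum_phiP [Finite F] (n : ℕ) : ∑ A ∈ MonF F n, phiP A = cop F n := by
  rw [cop, card_pairs n IsCoprime]; rfl

theorem finite_cop [Finite F] (n : ℕ) :
    Finite {p : F[X] × F[X] // p.1.Monic ∧ p.1.natDegree = n ∧ p.2.degree < (n : ℕ) ∧
    IsCoprime p.1 p.2} := by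
  have := finite_LT (F := F) n
  have := finite_Mon (F := F) n
  refine Finite.of_injective
    (β := {A : F[X] // A.Monic ∧ A.natDegree = n} × {B : F[X] // B.degree < (n : ℕ)})
    (fun p => (⟨p.1.1, p.2.1, p.2.2.1⟩, ⟨p.1.2, p.2.2.2.1⟩)) ?_
  intro p p' h
  simp only [Prod.mk.injEq, Subtype.mk.injEq] at h
  exact Subtype.ext (Prod.ext h.1 h.2)

theorem total_eq [Finite F] (n : ℕ) :
    Nat.card F ^ (2 * n) = ∑ k : Fin (n + 1), Nat.card F ^ (k : ℕ) * cop F (n - k) := by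
  have h1 : Nat.card F ^ (2 * n) = Nat.card ({A : F[X] // A.Monic ∧ A.natDegree = n} ×
      {B : F[X] // B.degree < (n : ℕ)}) := by
    rw [Nat.card_prod, card_LT, card_Mon, ← pow_add]; congr 1; ring
  have h2 : ∀ k : Fin (n + 1), Nat.card F ^ (k : ℕ) * cop F (n - k) =
      Nat.card ({A : F[X] // A.Monic ∧ A.natDegree = (k : ℕ)} ×
        {p : F[X] × F[X] // p.1.Monic ∧ p.1.natDegree = n - (k : ℕ) ∧
          p.2.degree < ((n - (k : ℕ) : ℕ) : WithBot ℕ) ∧ IsCoprime p.1 p.2}) := by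
    intro k
    rw [Nat.card_prod, card_Mon, cop]
  have h3 := fun k : Fin (n + 1) => finite_Mon (F := F) k
  have h4 := fun k : Fin (n + 1) => finite_cop (F := F) (n - k)
  rw [h1, Finset.sum_congr rfl (fun k _ => h2 k), ← Nat.card_sigma]
  symm
  refine Nat.card_congr (Equiv.ofBijective
    (fun s => (⟨s.2.1.1 * s.2.2.1.1, s.2.1.2.1.mul s.2.2.2.1, ?_⟩,
      ⟨s.2.1.1 * s.2.2.1.2, ?_⟩)) ⟨?_, ?_⟩)
  · rw [s.2.1.2.1.natDegree_mul s.2.2.2.1, s.2.1.2.2, s.2.2.2.2.1]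
    have := s.1.2
    omega
  · have hk := s.1.2
    have hd := s.2.2.2.2.2.1
    by_cases hB : s.2.2.1.2 = 0
    · rw [hB]; simp
    · rw [degree_eq_natDegree hB] at hd
      rw [degree_mul, degree_eq_natDegree hB, degree_eq_natDegree s.2.1.2.1.ne_zero, s.2.1.2.2]
      norm_cast at hd ⊢
      omega
  · rintro ⟨⟨k, hk⟩, ⟨G, hG, hGk⟩, ⟨⟨A, B⟩, hA, hAk, hB, hc⟩⟩
      ⟨⟨k', hk'⟩, ⟨G', hG', hGk'⟩, ⟨⟨A', B'⟩, hA', hAk', hB', hc'⟩⟩ h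
    simp only [Prod.mk.injEq, Subtype.mk.injEq] at h
    obtain ⟨hx, hy⟩ := h
    simp only at hGk hGk' hc hc' hA hA'
    have hGG : G = G' := by
      apply eq_of_monic_of_associated hG hG'
      apply associated_of_dvd_dvd
      · obtain ⟨s, t, hst⟩ := hc'
        exact ⟨s * A + t * B, by linear_combination (-G') * hst - s * hx - t * hy⟩
      · obtain ⟨s, t, hst⟩ := hc
        exact ⟨s * A' + t * B', by linear_combination (-G) * hst + s * hx + t * hy⟩
    subst hGG
    have hAA := mul_left_cancel₀ hG.ne_zero hx
    have hBB := mul_left_cancel₀ hG.ne_zero hy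
    subst hAA; subst hBB
    have hkk : k = k' := hGk.symm.trans hGk'
    subst hkk
    rfl
  · rintro ⟨⟨A, hA, hAn⟩, ⟨B, hB⟩⟩
    classical
    set g := EuclideanDomain.gcd A B with hg
    have hg0 : g ≠ 0 := by
      intro h0
      exact hA.ne_zero (EuclideanDomain.gcd_eq_zero_iff.1 h0).1
    have hbez := EuclideanDomain.gcd_eq_gcd_ab A B
    obtain ⟨A1, hA1⟩ := EuclideanDomain.gcd_dvd_left A B
    obtain ⟨B1, hB1⟩ := EuclideanDomain.gcd_dvd_right A B
    rw [← hg] at hbez hA1 hB1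
    have hl0 : g.leadingCoeff ≠ 0 := leadingCoeff_ne_zero.2 hg0
    have hlC : (C g.leadingCoeff⁻¹ : F[X]) * C g.leadingCoeff = 1 := by
      rw [← C_mul, inv_mul_cancel₀ hl0, C_1]
    set G := C g.leadingCoeff⁻¹ * g with hGdef
    have hG : G.Monic := by
      rw [hGdef, mul_comm]; exact monic_mul_leadingCoeff_inv hg0
    have hcop : IsCoprime (C g.leadingCoeff * A1) (C g.leadingCoeff * B1) := by
      refine ⟨C g.leadingCoeff⁻¹ * EuclideanDomain.gcdA A B,
        C g.leadingCoeff⁻¹ * EuclideanDomain.gcdB A B, ?_⟩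
      apply mul_left_cancel₀ hg0
      linear_combination (g * A1 * EuclideanDomain.gcdA A B + g * B1 * EuclideanDomain.gcdB A B) * hlC
        - hbez - EuclideanDomain.gcdA A B * hA1 - EuclideanDomain.gcdB A B * hB1
    have eA : G * (C g.leadingCoeff * A1) = A := by
      rw [hGdef]; linear_combination (g * A1) * hlC - hA1
    have eB : G * (C g.leadingCoeff * B1) = B := by
      rw [hGdef]; linear_combination (g * B1) * hlC - hB1
    generalize C g.leadingCoeff * A1 = A2 at *
    generalize C g.leadingCoeff * B1 = B2 at *
    have hA2 : A2.Monic := hG.of_mul_monic_left (by rw [eA]; exact hA)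
    have hdeg : G.natDegree + A2.natDegree = n := by
      rw [← hG.natDegree_mul hA2, eA, hAn]
    refine ⟨⟨⟨G.natDegree, by omega⟩, ⟨G, hG, rfl⟩, ⟨(A2, B2), hA2, ?_, ?_, hcop⟩⟩, ?_⟩
    · simp only; omega
    · simp only
      by_cases hB0 : B2 = 0
      · rw [hB0]; simp
      · rw [← eB, degree_mul, degree_eq_natDegree hB0, degree_eq_natDegree hG.ne_zero] at hB
        rw [degree_eq_natDegree hB0]
        norm_cast at hB ⊢
        omega
    · simp only [Prod.mk.injEq, Subtype.mk.injEq]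
      exact ⟨eA, eB⟩

theorem cop_succ [Finite F] (n : ℕ) :
    cop F (n + 1) + Nat.card F ^ (2 * n + 1) = Nat.card F ^ (2 * n + 2) := by
  have h1 := total_eq (F := F) n
  have h2 := total_eq (F := F) (n + 1)
  rw [Fin.sum_univ_succ] at h2
  have h3 : ∑ i : Fin (n + 1), Nat.card F ^ ((i.succ : Fin (n + 2)) : ℕ) * cop F (n + 1 - i.succ) =
      Nat.card F * Nat.card F ^ (2 * n) := by
    rw [h1, Finset.mul_sum]
    refine Finset.sum_congr rfl fun i _ => ?_
    rw [Fin.val_succ, pow_succ', Nat.add_sub_add_right, mul_assoc]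
  rw [h3] at h2
  simp only [Fin.val_zero, pow_zero, one_mul, Nat.sub_zero] at h2
  rw [pow_succ', show 2 * n + 2 = 2 * (n + 1) by ring, h2]

end count

section final
variable {F : Type*} [Field F] [DecidableEq F]

theorem sum_dvd_expo [Finite F] (d m : ℕ) (hd : 1 ≤ d) (hm : 1 ≤ m) :
    ((∑ A ∈ (MonF F (d * m)).filter (fun A => d ∣ expo A), phiP A : ℕ) : ℤ) =
      (Nat.card F : ℤ) ^ (d * m) * (Nat.card F : ℤ) ^ (m - 1) * ((Nat.card F : ℤ) - 1) := by
  have h1 : ∑ A ∈ (MonF F (d * m)).filter (fun A => d ∣ expo A), phiP A =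
      ∑ C ∈ MonF F m, phiP (C ^ d) := by
    symm
    refine Finset.sum_bij (fun C _ => C ^ d) ?_ ?_ ?_ ?_
    · intro C hC
      rw [mem_MonF] at hC
      rw [Finset.mem_filter, mem_MonF, hC.1.natDegree_pow, hC.2,
        dvd_expo_iff _ (hC.1.pow d) d hd]
      exact ⟨⟨hC.1.pow d, rfl⟩, C, hC.1, rfl⟩
    · intro C hC D hD h
      rw [mem_MonF] at hC hD
      apply eq_of_monic_of_associated hC.1 hD.1
      apply associated_of_dvd_dvd
      · exact (IsIntegrallyClosed.pow_dvd_pow_iff (by omega)).1 (dvd_of_eq h)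
      · exact (IsIntegrallyClosed.pow_dvd_pow_iff (by omega)).1 (dvd_of_eq h.symm)
    · intro A hA
      rw [Finset.mem_filter, mem_MonF] at hA
      obtain ⟨C, hC, hCA⟩ := (dvd_expo_iff A hA.1.1 d hd).1 hA.2
      refine ⟨C, ?_, hCA⟩
      rw [mem_MonF]
      refine ⟨hC, ?_⟩
      have := hA.1.2
      rw [← hCA, hC.natDegree_pow] at this
      exact Nat.eq_of_mul_eq_mul_left (by omega) this
    · intro C hC; rfl
  have h2 : ∑ C ∈ MonF F m, phiP (C ^ d) = Nat.card F ^ (d * m - m) * cop F m := by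
    rw [← sum_phiP, Finset.mul_sum]
    refine Finset.sum_congr rfl fun C hC => ?_
    rw [mem_MonF] at hC
    rw [phiP_pow C hC.1 d hd, hC.2]
  rw [h1, h2]
  obtain ⟨k, rfl⟩ : ∃ k, m = k + 1 := ⟨m - 1, by omega⟩
  have h3 := cop_succ (F := F) k
  have h4 : (cop F (k + 1) : ℤ) = (Nat.card F : ℤ) ^ (k + 1) *
      ((Nat.card F : ℤ) ^ k * ((Nat.card F : ℤ) - 1)) := by
    have : (cop F (k + 1) : ℤ) + (Nat.card F : ℤ) ^ (2 * k + 1) = (Nat.card F : ℤ) ^ (2 * k + 2) := by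
      exact_mod_cast h3
    linear_combination this
  have h5 : d * (k + 1) = (d * (k + 1) - (k + 1)) + (k + 1) := by
    have : k + 1 ≤ d * (k + 1) := Nat.le_mul_of_pos_left _ hd
    omega
  push_cast
  have h6 : (Nat.card F : ℤ) ^ (d * (k + 1)) =
      (Nat.card F : ℤ) ^ (d * (k + 1) - (k + 1)) * (Nat.card F : ℤ) ^ (k + 1) := by
    rw [← pow_add, ← h5]
  rw [h4, h6]
  ring

open ArithmeticFunction in
theorem sum_main [Finite F] (n : ℕ) (hn : 1 ≤ n) (g : ℕ → ℤ) :
    ∑ A ∈ MonF F n, (phiP A : ℤ) * g (expo A) =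
      ((Nat.card F : ℤ) - 1) * ((Nat.card F : ℤ) ^ n *
        ∑ t ∈ n.divisorsAntidiagonal, ∑ y ∈ t.2.divisorsAntidiagonal,
          (moebius t.1) * (Nat.card F : ℤ) ^ (y.1 - 1) * g y.2) := by
  let G : ArithmeticFunction ℤ := ⟨fun c => if c = 0 then 0 else g c, by simp⟩
  let Q : ArithmeticFunction ℤ := ⟨fun c => if c = 0 then 0 else (Nat.card F : ℤ) ^ (c - 1), by simp⟩
  have hG : ∀ c, c ≠ 0 → G c = g c := fun c hc => if_neg hc
  have hQ : ∀ c, c ≠ 0 → Q c = (Nat.card F : ℤ) ^ (c - 1) := fun c hc => if_neg hc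
  have hR : ∑ t ∈ n.divisorsAntidiagonal, ∑ y ∈ t.2.divisorsAntidiagonal,
      (moebius t.1) * (Nat.card F : ℤ) ^ (y.1 - 1) * g y.2 = ((moebius * G) * Q) n := by
    rw [mul_assoc, mul_comm G Q, ArithmeticFunction.mul_apply]
    refine Finset.sum_congr rfl fun t _ => ?_
    rw [ArithmeticFunction.mul_apply, Finset.mul_sum]
    refine Finset.sum_congr rfl fun y hy => ?_
    rw [Nat.mem_divisorsAntidiagonal] at hy
    have hy1 : y.1 ≠ 0 := by rintro h; simp [h] at hy; exact hy.2 hy.1.symm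
    have hy2 : y.2 ≠ 0 := by rintro h; simp [h] at hy; exact hy.2 hy.1.symm
    rw [hG _ hy2, hQ _ hy1]
    ring
  set H : ArithmeticFunction ℤ := moebius * G with hH
  have hGH : ∀ c, c ≠ 0 → g c = ∑ d ∈ c.divisors, H d := by
    intro c hc
    rw [← hG c hc, ← coe_zeta_mul_apply, hH, ← mul_assoc, coe_zeta_mul_moebius, one_mul]
  rw [hR, ArithmeticFunction.mul_apply]
  have hL : ∀ A ∈ MonF F n, (phiP A : ℤ) * g (expo A) =
      ∑ d ∈ n.divisors, if d ∣ expo A then H d * (phiP A : ℤ) else 0 := by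
    intro A hA
    rw [mem_MonF] at hA
    have he := expo_pos A hA.1 (by omega)
    rw [hGH _ (by omega), Finset.mul_sum, ← Finset.sum_filter]
    have : n.divisors.filter (fun d => d ∣ expo A) = (expo A).divisors := by
      ext d
      rw [Finset.mem_filter, Nat.mem_divisors, Nat.mem_divisors]
      constructor
      · rintro ⟨_, h⟩; exact ⟨h, by omega⟩
      · rintro ⟨h, _⟩
        refine ⟨⟨h.trans ?_, by omega⟩, h⟩
        obtain ⟨C, hC, hCA⟩ := (dvd_expo_iff A hA.1 _ he).1 dvd_rfl
        refine ⟨C.natDegree, ?_⟩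
        rw [← hC.natDegree_pow, hCA, hA.2]
    rw [this]
    exact Finset.sum_congr rfl fun d _ => mul_comm _ _
  rw [Finset.sum_congr rfl hL, Finset.sum_comm,
    Nat.sum_divisorsAntidiagonal (fun i j => H i * Q j), Finset.mul_sum, Finset.mul_sum]
  refine Finset.sum_congr rfl fun d hd => ?_
  rw [Nat.mem_divisors] at hd
  obtain ⟨⟨m, rfl⟩, hn0⟩ := hd
  have hd1 : 1 ≤ d := Nat.pos_of_ne_zero (by rintro rfl; simp at hn0)
  have hm1 : 1 ≤ m := Nat.pos_of_ne_zero (by rintro rfl; simp at hn0)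
  have hS := sum_dvd_expo (F := F) d m hd1 hm1
  rw [← Finset.sum_filter, ← Finset.mul_sum, Nat.mul_div_cancel_left m hd1, hQ m (by omega)]
  push_cast at hS
  rw [hS]
  ring

end final

/-- for `x ∈ F_q^×` of multiplicative order `o`, the number of pairs `(A, B)`
with `A` monic of degree `n`, `deg B < n`, and `Res(A, B) = x`, equals
`qⁿ · Σ_{abc = n} μ(a) · q^{b-1} · g(c)`, where `g(c) = gcd(c, q-1)` if
`gcd(c, q-1) ∣ (q-1)/o` and `g(c) = 0` otherwise. -/
theorem stmt_16 (F : Type*) [Field F] [Fintype F] (q : ℕ) (hq : Fintype.card F = q)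
    (n : ℕ) (hn : 1 ≤ n) (x : Fˣ) (o : ℕ) (ho : orderOf x = o) :
    (Nat.card {p : F[X] × F[X] // p.1.Monic ∧ p.1.natDegree = n ∧
        p.2.degree < (n : ℕ) ∧
        resultantAC p.1 p.2 = algebraMap F (AlgebraicClosure F) (x : F)} : ℤ) =
      (q : ℤ) ^ n *
        ∑ t ∈ n.divisorsAntidiagonal, ∑ y ∈ t.2.divisorsAntidiagonal,
          (ArithmeticFunction.moebius t.1) * (q : ℤ) ^ (y.1 - 1) *
            (if Nat.gcd y.2 (q - 1) ∣ (q - 1) / o then (Nat.gcd y.2 (q - 1) : ℤ) else 0) := by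
  classical
  have hq' : Nat.card F = q := by rw [Nat.card_eq_fintype_card, hq]
  have hq1 : 1 < q := by rw [← hq]; exact Fintype.one_lt_card
  have hne : (q : ℤ) - 1 ≠ 0 := by omega
  apply mul_left_cancel₀ hne
  have hmain := sum_main (F := F) n hn (fun c => (gfun q o c : ℤ))
  have hg : ∀ c, (gfun q o c : ℤ) =
      if Nat.gcd c (q - 1) ∣ (q - 1) / o then (Nat.gcd c (q - 1) : ℤ) else 0 := by
    intro c
    unfold gfun
    split_ifs <;> simp
  rw [hq'] at hmain
  simp only [← hg]
  rw [← hmain, card_pairs n (fun A B => resultantAC A B = algebraMap F (AlgebraicClosure F) (x : F))]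
  push_cast
  rw [Finset.mul_sum]
  refine Finset.sum_congr rfl fun A hA => ?_
  rw [mem_MonF] at hA
  have h := card_res_mul A hA.1 (by omega) x
  rw [hq', ho] at h
  have h' := congrArg (Nat.cast : ℕ → ℤ) h
  rw [Nat.cast_mul, Nat.cast_mul, Nat.cast_sub hq1.le, Nat.cast_one] at h'
  rw [← h', mul_comm]
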